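/- Let V be a finite-dimensional real inner product space, let J : V → V be a linear isometric complex structure (J ∘ J = -id and ⟨Jx, Jy⟩ = ⟨x, y⟩ for all x, y), and let S : V → V be a symmetric linear map with operator norm ‖S‖ < 1 that anticommutes with J (S ∘ J = -J ∘ S). Set A_S := (id + S)(id - S)⁻¹. Then (id - S) ∘ J ∘ (id - S)⁻¹ = J ∘ A_S, and A_S ∘ J = J ∘ A_S⁻¹. -/

import Mathlib

open scoped RealInnerProductSpace

/-!
Anticommutation says that `J` intertwines `-S` with `S`, hence also their Cayley transforms
`A_{-S}` and `A_S`, where `A_S = (1 + S) (1 - S)⁻¹`. Changing the sign of `S` swaps numerator and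
denominator, so `A_{-S} = A_S⁻¹`.
-/

theorem semiconjBy_ringInverse_right {M : Type*} [MonoidWithZero M] {a x y : M}
    (h : SemiconjBy a x y) (hx : IsUnit x) (hy : IsUnit y) :
    SemiconjBy a (Ring.inverse x) (Ring.inverse y) := by
  obtain ⟨u, rfl⟩ := hx
  obtain ⟨v, rfl⟩ := hy
  simpa only [Ring.inverse_unit] using h.units_inv_right

theorem isUnit_one_add_of_norm_lt_one {R : Type*} [NormedRing R] [HasSummableGeomSeries R] {x : R}
    (h : ‖x‖ < 1) : IsUnit (1 + x) := by
  rw [← sub_neg_eq_add]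
  exact isUnit_one_sub_of_norm_lt_one (by rwa [norm_neg])

section CayleyTransform

variable {R : Type*} [Ring R] {J S T : R}

/-- The Cayley transform `A_S = (1 + S) (1 - S)⁻¹` of a ring element `S`, by which a twisting
endomorphism deforms the metric. Since `Ring.inverse` vanishes off the units, it is `0` when
`1 - S` is not a unit. -/
noncomputable def cayleyTransform (S : R) : R :=
  (1 + S) * Ring.inverse (1 - S)

theorem inverse_cayleyTransform (hS : IsUnit (1 - S)) :
    Ring.inverse (cayleyTransform S) = cayleyTransform (-S) :=
  calc Ring.inverse (cayleyTransform S)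
      = Ring.inverse (Ring.inverse (1 - S)) * Ring.inverse (1 + S) :=
        Ring.inverse_mul (Or.inr hS.ringInverse)
    _ = (1 - S) * Ring.inverse (1 + S) := by rw [Ring.inverse_inverse hS]
    _ = cayleyTransform (-S) := by rw [cayleyTransform, ← sub_eq_add_neg, sub_neg_eq_add]

theorem semiconjBy_cayleyTransform (h : SemiconjBy J S T) (hS : IsUnit (1 - S))
    (hT : IsUnit (1 - T)) : SemiconjBy J (cayleyTransform S) (cayleyTransform T) :=
  have hadd : SemiconjBy J (1 + S) (1 + T) := (SemiconjBy.one_right J).add_right h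
  have hsub : SemiconjBy J (1 - S) (1 - T) := (SemiconjBy.one_right J).sub_right h
  hadd.mul_right (semiconjBy_ringInverse_right hsub hS hT)

theorem one_sub_mul_mul_inverse_one_sub (h : SemiconjBy J (-S) S) :
    (1 - S) * J * Ring.inverse (1 - S) = J * cayleyTransform S := by
  have hsub : J * (1 + S) = (1 - S) * J := by
    simpa only [sub_neg_eq_add] using ((SemiconjBy.one_right J).sub_right h).eq
  rw [← hsub, mul_assoc, cayleyTransform]

theorem cayleyTransform_mul_eq_mul_inverse (h : SemiconjBy J (-S) S) (hsub : IsUnit (1 - S))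
    (hadd : IsUnit (1 + S)) :
    cayleyTransform S * J = J * Ring.inverse (cayleyTransform S) := by
  rw [inverse_cayleyTransform hsub]
  exact (semiconjBy_cayleyTransform h (by rwa [sub_neg_eq_add]) hsub).eq.symm

theorem twist_operator_identities_general (hsub : IsUnit (1 - S)) (hadd : IsUnit (1 + S))
    (hSJ : S * J = -(J * S)) :
    (1 - S) * J * Ring.inverse (1 - S) = J * cayleyTransform S ∧
      cayleyTransform S * J = J * Ring.inverse (cayleyTransform S) := by
  have h : SemiconjBy J (-S) S := by rw [SemiconjBy, mul_neg, hSJ]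
  exact ⟨one_sub_mul_mul_inverse_one_sub h, cayleyTransform_mul_eq_mul_inverse h hsub hadd⟩

end CayleyTransform

/-- With `J` an isometric complex structure and `S` a symmetric operator
with `‖S‖ < 1` anticommuting with `J`, setting `A_S = (1+S)(1-S)⁻¹` one has
`(1-S) J (1-S)⁻¹ = J A_S` and `A_S J = J A_S⁻¹`. -/
theorem twist_operator_identities
    {V : Type*} [NormedAddCommGroup V] [InnerProductSpace ℝ V] [FiniteDimensional ℝ V]
    (J S : V →L[ℝ] V)
    (hJ2 : J * J = -1)
    (hJiso : ∀ x y : V, ⟪J x, J y⟫ = ⟪x, y⟫)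
    (hSsymm : ∀ x y : V, ⟪S x, y⟫ = ⟪x, S y⟫)
    (hSnorm : ‖S‖ < 1)
    (hSJ : S * J = -(J * S)) :
    (1 - S) * J * Ring.inverse (1 - S) = J * ((1 + S) * Ring.inverse (1 - S)) ∧
      ((1 + S) * Ring.inverse (1 - S)) * J
        = J * Ring.inverse ((1 + S) * Ring.inverse (1 - S)) := by
  have : CompleteSpace V := FiniteDimensional.complete ℝ V
  exact twist_operator_identities_general (isUnit_one_sub_of_norm_lt_one hSnorm)
    (isUnit_one_add_of_norm_lt_one hSnorm) hSJ
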